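/- arXiv:1709.01225 — 3 statements merged into one kernel-verified Lean document; each statement's English description precedes it below -/
import Mathlib

section
/- For every connected simple graph G of order n ≥ 2, vcfc(G) ≤ ⌈log₂(n+1)⌉. -/
open SimpleGraph

/-- A vertex coloring with `k` colors makes `G` conflict-free vertex-connected if any two
distinct vertices are joined by a path on which some color is used on exactly one vertex. -/
def IsVCFCColoring {V : Type*} (G : SimpleGraph V) (k : ℕ) (c : V → Fin k) : Prop :=
  ∀ u v : V, u ≠ v → ∃ p : G.Walk u v, p.IsPath ∧
    ∃ i : Fin k, (p.support.filter (fun x => c x = i)).length = 1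

/-- The conflict-free vertex-connection number: the least number of colors in a
conflict-free vertex-connected coloring. -/
noncomputable def vcfc {V : Type*} (G : SimpleGraph V) : ℕ :=
  sInf {k | ∃ c : V → Fin k, IsVCFCColoring G k c}

/-!
It suffices to color a spanning tree so that any two vertices of equal color are separated, on the
path joining them, by a vertex of larger color: the largest color of a path then occurs only once.
Such a vertex ranking of a tree with fewer than `2 ^ (k + 1)` vertices needs only `k + 1` colors.
Give the top color to a vertex `v` minimizing the sum of the distances to all vertices. Moving from
`v` to its neighbor in a component `C` of the tree minus `v` shortens `|C|` distances by one and
lengthens the others by at most one, so `C` has at most half of all vertices, hence fewer than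
`2 ^ k`, and the remaining `k` colors suffice for it.
-/

section Ranking

variable {V : Type*} {α : Type*} {G : SimpleGraph V} {c : V → α}

/-- A vertex ranking (ordered coloring): any path between distinct vertices of the same color
contains a vertex of larger color. Quantifying over all walks instead of all paths makes no
difference, since every walk contains a path with the same ends. -/
def IsVertexRanking [LT α] (G : SimpleGraph V) (c : V → α) : Prop :=
  ∀ ⦃u v : V⦄, u ≠ v → c u = c v → ∀ p : G.Walk u v, ∃ x ∈ p.support, c u < c x

/-- `G` admits a vertex ranking with the `k` colors of `Fin k`; the least such `k` is the vertex
ranking number, or tree-depth, of `G`. -/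
def VertexRankable (G : SimpleGraph V) (k : ℕ) : Prop :=
  ∃ c : V → Fin k, IsVertexRanking G c

lemma IsVertexRanking.exists_lt_of_support_subset [LT α] {s : Set V}
    (hc : IsVertexRanking (G.induce s) fun x => c x) {u v : V} (huv : u ≠ v) (hcuv : c u = c v)
    (p : G.Walk u v) (hp : ∀ x ∈ p.support, x ∈ s) : ∃ x ∈ p.support, c u < c x := by
  obtain ⟨x, hx, hlt⟩ := hc (by simpa using huv) hcuv (p.induce s hp)
  exact ⟨x, by simpa using hx, hlt⟩

lemma IsVertexRanking.of_connectedComponent [LT α]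
    (hc : ∀ C : G.ConnectedComponent, IsVertexRanking C.toSimpleGraph fun x => c x) :
    IsVertexRanking G c := by
  classical
  intro u v huv hcuv p
  exact (hc (G.connectedComponentMk u)).exists_lt_of_support_subset huv hcuv p fun x hx =>
    ConnectedComponent.sound (p.takeUntil x hx).reachable.symm

lemma IsVertexRanking.of_induce_compl_singleton [Preorder α] {r : V}
    (hr : ∀ x ≠ r, c x < c r) (hc : IsVertexRanking (G.induce {r}ᶜ) fun x => c x) :
    IsVertexRanking G c := by
  intro u v huv hcuv p
  by_cases hrp : r ∈ p.support
  · have hur : u ≠ r := by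
      rintro rfl
      exact (hr v huv.symm).ne hcuv.symm
    exact ⟨r, hrp, hr u hur⟩
  · exact hc.exists_lt_of_support_subset huv hcuv p fun x hx hxr => hrp (hxr ▸ hx)

lemma IsVertexRanking.exists_length_filter_eq_one [LinearOrder α] (hc : IsVertexRanking G c)
    {u v : V} {p : G.Walk u v} (hp : p.IsPath) :
    ∃ x, (p.support.filter fun y => c y = c x).length = 1 := by
  classical
  obtain ⟨x, hx, hmax⟩ := p.support.toFinset.exists_max_image c ⟨u, by simp⟩
  simp only [List.mem_toFinset] at hx hmax
  have eq_of_color_eq : ∀ y ∈ p.support, c y = c x → y = x := by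
    intro y hy hyx
    by_contra hne
    let q : G.Walk y x := (p.takeUntil y hy).reverse.append (p.takeUntil x hx)
    obtain ⟨z, hz, hlt⟩ := hc hne hyx q
    have hzp : z ∈ p.support := by
      rw [Walk.mem_support_append_iff, Walk.support_reverse, List.mem_reverse] at hz
      exact hz.elim (p.support_takeUntil_subset_support hy ·)
        (p.support_takeUntil_subset_support hx ·)
    exact (hmax z hzp).not_gt (hyx ▸ hlt)
  refine ⟨x, ?_⟩
  calc (p.support.filter fun y => c y = c x).length
      = (p.support.filter fun y => y == x).length := by
        congr 1
        refine List.filter_congr fun y hy => ?_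
        rw [beq_eq_decide, decide_eq_decide]
        exact ⟨eq_of_color_eq y hy, congrArg c⟩
    _ = p.support.count x := List.count_eq_length_filter.symm
    _ = 1 := List.count_eq_one_of_mem hp.support_nodup hx

lemma vertexRankable_of_connectedComponent {k : ℕ}
    (h : ∀ C : G.ConnectedComponent, VertexRankable C.toSimpleGraph k) : VertexRankable G k := by
  choose c hc using h
  refine ⟨fun x => c (G.connectedComponentMk x) ⟨x, rfl⟩, .of_connectedComponent fun C => ?_⟩
  convert hc C using 2 with x
  obtain ⟨x, hx⟩ := x
  obtain rfl : G.connectedComponentMk x = C := hx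
  rfl

lemma VertexRankable.succ_of_induce_compl_singleton {k : ℕ} {r : V}
    (h : VertexRankable (G.induce {r}ᶜ) k) : VertexRankable G (k + 1) := by
  classical
  obtain ⟨c, hc⟩ := h
  let c' : V → Fin (k + 1) := fun x => if hx : x = r then Fin.last k else (c ⟨x, hx⟩).castSucc
  have c'_of_ne (x : V) (hx : x ≠ r) : c' x = (c ⟨x, hx⟩).castSucc := dif_neg hx
  refine ⟨c', .of_induce_compl_singleton (r := r) ?_ ?_⟩
  · intro x hx
    simp [c', hx, Fin.castSucc_lt_last]
  · intro u v huv hcuv p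
    simp only [c'_of_ne _ u.2, c'_of_ne _ v.2] at hcuv
    obtain ⟨x, hx, hlt⟩ := hc huv (Fin.castSucc_injective k hcuv) p
    refine ⟨x, hx, ?_⟩
    simpa only [c'_of_ne _ u.2, c'_of_ne _ x.2, Fin.castSucc_lt_castSucc_iff] using hlt

end Ranking

section Centroid

variable {V : Type*} {G : SimpleGraph V}

/-- A centroid of `G`: a vertex each of whose branches, the components of `G` minus the vertex, has
at most half of the vertices of `G`. The order is `Nat.card V`, which is meaningful only for
finite `V`. -/
def IsCentroid (G : SimpleGraph V) (v : V) : Prop :=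
  ∀ C : (G.induce {v}ᶜ).ConnectedComponent, 2 * C.supp.ncard ≤ Nat.card V

lemma exists_adj_mem_of_connectedComponent_induce_compl_singleton (hG : G.Preconnected) {v : V}
    (C : (G.induce {v}ᶜ).ConnectedComponent) : ∃ w ∈ C.supp, G.Adj v w := by
  induction C using ConnectedComponent.ind with
  | _ x =>
    obtain ⟨x, hxv⟩ := x
    obtain ⟨p, hp⟩ := (hG v x).exists_isPath
    cases p with
    | nil => exact absurd rfl hxv
    | @cons _ w _ hvw q =>
      have hvq : v ∉ q.support := (Walk.cons_isPath_iff _ _).1 hp |>.2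
      have hq : ∀ y ∈ q.support, y ∈ ({v}ᶜ : Set V) := fun y hy hyv => hvq (hyv ▸ hy)
      exact ⟨⟨w, hvw.ne'⟩, ConnectedComponent.sound (q.induce _ hq).reachable, hvw⟩

lemma dist_eq_length_of_isAcyclic (hG : G.IsAcyclic) {u v : V} {p : G.Walk u v} (hp : p.IsPath) :
    G.dist u v = p.length := by
  obtain ⟨q, hq, hlen⟩ := p.reachable.exists_path_of_dist
  have hqp : q = p := congrArg Subtype.val ((hG.subsingleton_path u v).elim ⟨q, hq⟩ ⟨p, hp⟩)
  rw [← hlen, hqp]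

lemma dist_eq_dist_add_one_of_reachable_induce_compl_singleton (hG : G.IsAcyclic) {v : V}
    {w x : ({v}ᶜ : Set V)} (hvw : G.Adj v w) (hwx : (G.induce {v}ᶜ).Reachable w x) :
    G.dist v x = G.dist w x + 1 := by
  obtain ⟨p, hp⟩ := hwx.exists_isPath
  let q : G.Walk w x := p.map (Embedding.induce ({v}ᶜ : Set V)).toHom
  have hq : q.IsPath := hp.map Subtype.val_injective
  have hvq : v ∉ q.support := by
    intro hv
    obtain ⟨y, -, hyv⟩ := List.mem_map.1 (Walk.support_map _ p ▸ hv)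
    exact y.2 hyv
  rw [dist_eq_length_of_isAcyclic hG hq, ← q.length_cons hvw]
  exact dist_eq_length_of_isAcyclic hG (hq.cons hvq)

lemma sum_dist_add_two_mul_card_le [Fintype V] {v w : V} (hvw : G.Adj v w) (s : Finset V)
    (hs : ∀ x ∈ s, G.dist v x = G.dist w x + 1) :
    ∑ x, G.dist w x + 2 * s.card ≤ ∑ x, G.dist v x + Fintype.card V := by
  classical
  have dist_add_le (x : V) : G.dist w x + (if x ∈ s then 2 else 0) ≤ G.dist v x + 1 := by
    split_ifs with hx
    · have := hs x hx
      omega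
    · have := hvw.diff_dist_adj (u := x)
      simp only [G.dist_comm (u := x)] at this
      omega
  simpa [Finset.sum_add_distrib, mul_comm] using
    Finset.sum_le_sum fun x (_ : x ∈ Finset.univ) => dist_add_le x

lemma isCentroid_of_forall_sum_dist_le [Fintype V] (hG : G.IsTree) {v : V}
    (hv : ∀ w, ∑ x, G.dist v x ≤ ∑ x, G.dist w x) : IsCentroid G v := by
  classical
  intro C
  obtain ⟨w, hwC, hvw⟩ :=
    exists_adj_mem_of_connectedComponent_induce_compl_singleton hG.connected.preconnected C
  let s : Finset V := C.supp.toFinset.map (Function.Embedding.subtype _)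
  have dist_eq : ∀ x ∈ s, G.dist v x = G.dist w x + 1 := by
    intro x hx
    obtain ⟨x, hxC, rfl⟩ := Finset.mem_map.1 hx
    exact dist_eq_dist_add_one_of_reachable_induce_compl_singleton hG.isAcyclic hvw
      (C.reachable_of_mem_supp hwC (by simpa using hxC))
  have hsum := sum_dist_add_two_mul_card_le hvw s dist_eq
  have hs : s.card = C.supp.ncard := by rw [Finset.card_map, Set.ncard_eq_toFinset_card']
  have := hv w
  rw [Nat.card_eq_fintype_card]
  omega

lemma exists_isCentroid_of_isTree [Finite V] (hG : G.IsTree) : ∃ v, IsCentroid G v := by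
  have := Fintype.ofFinite V
  have := hG.connected.nonempty
  obtain ⟨v, hv⟩ := Finite.exists_min fun v => ∑ x, G.dist v x
  exact ⟨v, isCentroid_of_forall_sum_dist_le hG hv⟩

end Centroid

lemma vertexRankable_of_isTree_of_card_lt_two_pow {V : Type*} [Finite V] {T : SimpleGraph V}
    (hT : T.IsTree) {k : ℕ} (hk : Nat.card V < 2 ^ k) : VertexRankable T k := by
  induction k generalizing V with
  | zero =>
    have := hT.connected.nonempty
    have := Nat.card_pos (α := V)
    omega
  | succ k ih =>
    obtain ⟨v, hv⟩ := exists_isCentroid_of_isTree hT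
    refine .succ_of_induce_compl_singleton (r := v) (vertexRankable_of_connectedComponent ?_)
    intro C
    refine ih ((hT.isAcyclic.induce _).isTree_connectedComponent C) ?_
    have hC : 2 * Nat.card C.supp ≤ Nat.card V := hv C
    change Nat.card C.supp < 2 ^ k
    omega

lemma IsVertexRanking.isVCFCColoring {V : Type*} {G H : SimpleGraph V} {k : ℕ} {c : V → Fin k}
    (hH : H.Preconnected) (hHG : H ≤ G) (hc : IsVertexRanking H c) : IsVCFCColoring G k c := by
  intro u v _
  obtain ⟨p, hp⟩ := (hH u v).exists_isPath
  obtain ⟨x, hx⟩ := hc.exists_length_filter_eq_one hp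
  exact ⟨p.mapLe hHG, hp.mapLe hHG, c x, by simpa using hx⟩

/-- For every connected graph `G` of order `n ≥ 2`, `vcfc(G) ≤ ⌈log₂(n+1)⌉`. -/
theorem vcfc_le_clog {V : Type*} [Fintype V] (G : SimpleGraph V) (hG : G.Connected)
    (n : ℕ) (hn : Fintype.card V = n) (h2 : 2 ≤ n) :
    vcfc G ≤ Nat.clog 2 (n + 1) := by
  obtain ⟨T, hTG, hT⟩ := hG.exists_isTree_le
  have hcard : Nat.card V < 2 ^ Nat.clog 2 (n + 1) := by
    rw [Nat.card_eq_fintype_card, hn]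
    exact Nat.le_pow_clog one_lt_two (n + 1)
  obtain ⟨c, hc⟩ := vertexRankable_of_isTree_of_card_lt_two_pow hT hcard
  exact Nat.sInf_le ⟨c, hc.isVCFCColoring hT.connected.preconnected hTG⟩
end

section
/- For every noncomplete 2-edge-connected simple graph G, cfc(G) = 2. -/
open SimpleGraph

/-- An edge coloring with `k` colors makes `G` conflict-free connected if any two
distinct vertices are joined by a path on which some color is used on exactly one edge. -/
def IsCFCColoring {V : Type*} (G : SimpleGraph V) (k : ℕ) (c : Sym2 V → Fin k) : Prop :=
  ∀ u v : V, u ≠ v → ∃ p : G.Walk u v, p.IsPath ∧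
    ∃ i : Fin k, (p.edges.filter (fun e => c e = i)).length = 1

/-- The conflict-free connection number: the least number of colors in a
conflict-free connected edge coloring. -/
noncomputable def cfcNum {V : Type*} (G : SimpleGraph V) : ℕ :=
  sInf {k | ∃ c : Sym2 V → Fin k, IsCFCColoring G k c}

/-!
One color never suffices for a noncomplete graph, since a path on which that color appears exactly
once is an edge.

Two colors suffice as soon as some set of edges is marked so that any two vertices are joined by a
path with exactly one marked edge. Such a set is grown along ears. Suppose the marking is good on a
vertex set `U`, and a path from a new vertex `w` adjacent to `a ∈ U` meets `U` only in its last
vertex `b`. Leave the path unmarked. If `a ≠ b`, nothing new is marked: to join two vertices of the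
ear, go around it through `w`, `a` and `b`, following between `a` and `b` a path in `U` with exactly
one marked edge. If `a = b`, the ear closes a cycle and the edge `wa` is marked, so that again going
around the ear crosses exactly one mark. Since old marks are never altered, Zorn's lemma yields a
maximal marking, and 2-edge-connectedness provides an ear unless it already covers all vertices.
-/

section Marks

lemma sym2_subset_sym2 {α : Type*} {s t : Set α} (h : s ⊆ t) : s.sym2 ⊆ t.sym2 :=
  fun _ he => Set.mem_sym2_iff_subset.mpr ((Set.mem_sym2_iff_subset.mp he).trans h)

variable {V : Type*} {G : SimpleGraph V} {S S' : Set (Sym2 V)} {U U' : Set V} {u v w x y : V}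

open Classical in
/-- The number of edges of `p`, counted with multiplicity, that lie in the set `S` of marked
edges. -/
noncomputable def markCount (S : Set (Sym2 V)) (p : G.Walk u v) : ℕ :=
  p.edges.countP (· ∈ S)

@[simp]
lemma markCount_append (p : G.Walk u v) (q : G.Walk v w) :
    markCount S (p.append q) = markCount S p + markCount S q := by
  simp [markCount]

@[simp]
lemma markCount_reverse (p : G.Walk u v) : markCount S p.reverse = markCount S p := by
  simp [markCount]

lemma markCount_eq_zero {p : G.Walk u v} : markCount S p = 0 ↔ ∀ e ∈ p.edges, e ∉ S := by
  simp [markCount]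

lemma markCount_cons_of_mem {p : G.Walk v w} (h : G.Adj u v) (hS : s(u, v) ∈ S) :
    markCount S (.cons h p) = markCount S p + 1 := by
  simp [markCount, hS]

lemma markCount_cons_of_notMem {p : G.Walk v w} (h : G.Adj u v) (hS : s(u, v) ∉ S) :
    markCount S (.cons h p) = markCount S p := by
  simp [markCount, hS]

lemma markCount_inter_sym2 {p : G.Walk u v} (hp : ∀ z ∈ p.support, z ∈ U) :
    markCount (S ∩ U.sym2) p = markCount S p := by
  refine List.countP_congr fun e he => ?_
  have heU : e ∈ U.sym2 :=
    Set.mem_sym2_iff_subset.mpr fun z hz => hp z (p.mem_support_of_mem_edges he hz)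
  simp [heU]

/-- `x` and `y` are joined by a path of `G` inside `U` that has exactly one edge in `S`. -/
def JoinedOnce (G : SimpleGraph V) (S : Set (Sym2 V)) (U : Set V) (x y : V) : Prop :=
  ∃ p : G.Walk x y, p.IsPath ∧ (∀ z ∈ p.support, z ∈ U) ∧ markCount S p = 1

lemma JoinedOnce.symm (h : JoinedOnce G S U x y) : JoinedOnce G S U y x := by
  obtain ⟨p, hp, hpU, hpS⟩ := h
  exact ⟨p.reverse, hp.reverse, by simpa using hpU, by simpa using hpS⟩

lemma JoinedOnce.mono (h : JoinedOnce G S U x y) (hU : U ⊆ U') (hS : S = S' ∩ U.sym2) :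
    JoinedOnce G S' U' x y := by
  obtain ⟨p, hp, hpU, hpS⟩ := h
  refine ⟨p, hp, fun z hz => hU (hpU z hz), ?_⟩
  rwa [hS, markCount_inter_sym2 hpU] at hpS

end Marks

section Paths

variable {V : Type*} {G : SimpleGraph V} {u v w x y z : V}

lemma isPath_append_of_support_inter {p : G.Walk u v} {q : G.Walk v w} (hp : p.IsPath)
    (hq : q.IsPath) (h : ∀ z ∈ p.support, z ∈ q.support → z = v) : (p.append q).IsPath := by
  have hq' := hq.support_nodup
  rw [← Walk.cons_tail_support, List.nodup_cons] at hq'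
  rw [Walk.isPath_def, Walk.support_append, List.nodup_append']
  refine ⟨hp.support_nodup, hq'.2, fun z hzp hzq => ?_⟩
  obtain rfl := h z hzp (List.mem_of_mem_tail hzq)
  exact hq'.1 hzq

lemma notMem_support_of_isPath_append_append {p : G.Walk u x} {q : G.Walk x y} {r : G.Walk y v}
    (h : (p.append (q.append r)).IsPath) (hxy : x ≠ y) (hz : z ∈ p.support) : z ∉ r.support := by
  intro hzr
  have hzx : z = x := by
    by_contra hzx
    exact h.ne_of_mem_support_of_append hzx hz (Walk.mem_support_append_iff _ _ |>.mpr (.inr hzr))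
      rfl
  subst hzx
  exact h.of_append_right.ne_of_mem_support_of_append hxy q.start_mem_support hzr rfl

lemma exists_eq_append_append_or (p : G.Walk u v) (hx : x ∈ p.support) (hy : y ∈ p.support) :
    (∃ (a : G.Walk u x) (b : G.Walk x y) (c : G.Walk y v), p = a.append (b.append c)) ∨
      ∃ (a : G.Walk u y) (b : G.Walk y x) (c : G.Walk x v), p = a.append (b.append c) := by
  obtain ⟨q, r, rfl⟩ := Walk.mem_support_iff_exists_append.mp hx
  rcases (Walk.mem_support_append_iff _ _).mp hy with hy | hy
  · obtain ⟨a, b, rfl⟩ := Walk.mem_support_iff_exists_append.mp hy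
    exact .inr ⟨a, b, r, (Walk.append_assoc _ _ _).symm⟩
  · obtain ⟨b, c, rfl⟩ := Walk.mem_support_iff_exists_append.mp hy
    exact .inl ⟨q, b, c, rfl⟩

lemma exists_isPath_to_first_mem {U : Set V} (p : G.Walk u v) (hv : v ∈ U) :
    ∃ w ∈ U, ∃ q : G.Walk u w, q.IsPath ∧ q.edges ⊆ p.edges ∧
      ∀ z ∈ q.support, z ∈ U → z = w := by
  classical
  obtain ⟨w, hw, hwp, hfirst⟩ := p.exists_mem_support_forall_mem_support_imp_eq
    {z ∈ p.support.toFinset | z ∈ U} ⟨v, by simp [hv]⟩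
  have hsub := (p.takeUntil w hwp).support_bypass_subset_support
  refine ⟨w, (Finset.mem_filter.mp hw).2, (p.takeUntil w hwp).bypass, Walk.bypass_isPath _,
    fun e he => p.edges_takeUntil_subset_edges hwp (Walk.edges_bypass_subset_edges _ he), ?_⟩
  intro z hz hzU
  have hzp : z ∈ p.support := p.support_takeUntil_subset_support hwp (hsub hz)
  exact hfirst z (by simp [hzp, hzU]) (hsub hz)

end Paths

/-- An ear of `G` on the vertex set `U`: an edge from `foot ∈ U` to a vertex `start ∉ U`, followed
by a path, the `spine`, that leads from `start` back to `tip`, its only vertex in `U`. The ear is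
closed if `foot = tip`. -/
structure Ear {V : Type*} (G : SimpleGraph V) (U : Set V) where
  foot : V
  start : V
  tip : V
  foot_mem : foot ∈ U
  start_notMem : start ∉ U
  tip_mem : tip ∈ U
  adj : G.Adj start foot
  spine : G.Walk start tip
  isPath_spine : spine.IsPath
  eq_tip : ∀ z ∈ spine.support, z ∈ U → z = tip
  notMem_edges_spine : s(start, foot) ∉ spine.edges

namespace Ear

variable {V : Type*} {G : SimpleGraph V} {S : Set (Sym2 V)} {U : Set V} {x y : V}

/-- The vertices of `U` together with those of the ear. -/
def union (E : Ear G U) : Set V := U ∪ {z | z ∈ E.spine.support}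

/-- The marked edges `S` fit the ear if the spine is unmarked and some way around from `start` to
`tip`, through `foot` and then inside `U`, has exactly one marked edge. -/
structure Fits (E : Ear G U) (S : Set (Sym2 V)) : Prop where
  markCount_spine : markCount S E.spine = 0
  exists_around : ∃ m : G.Walk E.foot E.tip, m.IsPath ∧ (∀ z ∈ m.support, z ∈ U) ∧
    markCount S (.cons E.adj m) = 1

lemma exists_of_isEdgeConnected_two (hG : G.IsEdgeConnected 2) (hU : U.Nonempty)
    (hU' : U ≠ Set.univ) : Nonempty (Ear G U) := by
  obtain ⟨u, hu⟩ := hU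
  obtain ⟨v, hv⟩ := (Set.ne_univ_iff_exists_notMem U).mp hU'
  obtain ⟨p⟩ := hG.preconnected two_ne_zero u v
  obtain ⟨⟨⟨a, w⟩, haw⟩, -, ha, hw⟩ := p.exists_boundary_dart U hu hv
  have hreach := isEdgeConnected_two.mp hG s(w, a) w a
  obtain ⟨q, hq⟩ := reachable_deleteEdges_iff_exists_walk.mp hreach
  obtain ⟨b, hb, r, hr, hrq, hrU⟩ := exists_isPath_to_first_mem q ha
  exact ⟨⟨a, w, b, ha, hw, hb, haw.symm, r, hr, hrU, fun h => hq (hrq h)⟩⟩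

lemma notMem_sym2_of_mem_edges_spine (E : Ear G U) {e : Sym2 V} (he : e ∈ E.spine.edges) :
    e ∉ U.sym2 := by
  induction e with
  | h u v =>
    rintro ⟨hu, hv⟩
    have hu_tip := E.eq_tip u (E.spine.fst_mem_support_of_mem_edges he) hu
    have hv_tip := E.eq_tip v (E.spine.snd_mem_support_of_mem_edges he) hv
    exact (E.spine.adj_of_mem_edges he).ne (hu_tip.trans hv_tip.symm)

lemma Fits.joinedOnce_of_spine_eq {E : Ear G U} (hS : E.Fits S) (hxy : x ≠ y) {a : G.Walk E.start x}
    {b : G.Walk x y} {c : G.Walk y E.tip} (habc : E.spine = a.append (b.append c)) :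
    JoinedOnce G S E.union x y := by
  obtain ⟨hspine, m, hm, hmU, hmS⟩ := hS
  have hpath : (a.append (b.append c)).IsPath := habc ▸ E.isPath_spine
  have ha_spine : ∀ z ∈ a.support, z ∈ E.spine.support := fun z hz => by simp [habc, hz]
  have hc_spine : ∀ z ∈ c.support, z ∈ E.spine.support := fun z hz => by simp [habc, hz]
  have hac : ∀ z ∈ a.support, z ∉ c.support := fun z hz =>
    notMem_support_of_isPath_append_append hpath hxy hz
  have haU : ∀ z ∈ a.support, z ∉ U := fun z hz hzU =>
    hac z hz (E.eq_tip z (ha_spine z hz) hzU ▸ c.end_mem_support)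
  have hmc : (m.append c.reverse).IsPath :=
    isPath_append_of_support_inter hm hpath.of_append_right.of_append_right.reverse
      fun z hzm hzc => E.eq_tip z (hc_spine z (by simpa using hzc)) (hmU z hzm)
  have hamc : ∀ z ∈ a.support, z ∉ (m.append c.reverse).support := fun z hz => by
    simpa using ⟨fun hzm => haU z hz (hmU z hzm), hac z hz⟩
  refine ⟨a.reverse.append (.cons E.adj (m.append c.reverse)), ?_, ?_, ?_⟩
  · refine isPath_append_of_support_inter hpath.of_append_left.reverse
      (hmc.cons (hamc _ a.start_mem_support)) fun z hza hz => ?_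
    rw [Walk.support_cons, List.mem_cons] at hz
    exact hz.resolve_right (hamc z (by simpa using hza))
  · intro z hz
    simp only [Walk.mem_support_append_iff, Walk.support_cons, List.mem_cons,
      Walk.support_reverse, List.mem_reverse] at hz
    rcases hz with hz | rfl | hz | hz
    · exact .inr (ha_spine z hz)
    · exact .inr E.spine.start_mem_support
    · exact .inl (hmU z hz)
    · exact .inr (hc_spine z hz)
  · have hzero : markCount S a = 0 ∧ markCount S b = 0 ∧ markCount S c = 0 := by
      simpa [habc] using hspine
    rw [← Walk.cons_append, markCount_append, markCount_append, markCount_reverse,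
      markCount_reverse, hmS, hzero.1, hzero.2.2]

lemma Fits.joinedOnce_of_mem_spine {E : Ear G U} (hS : E.Fits S) (hx : x ∈ E.spine.support)
    (hy : y ∈ E.spine.support) (hxy : x ≠ y) : JoinedOnce G S E.union x y := by
  rcases exists_eq_append_append_or E.spine hx hy with ⟨a, b, c, habc⟩ | ⟨a, b, c, habc⟩
  · exact hS.joinedOnce_of_spine_eq hxy habc
  · exact (hS.joinedOnce_of_spine_eq hxy.symm habc).symm

lemma joinedOnce_of_tip (E : Ear G U) (hS : markCount S E.spine = 0)
    (hx : x ∈ E.spine.support) (h : JoinedOnce G S U E.tip y) : JoinedOnce G S E.union x y := by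
  obtain ⟨p, hp, hpU, hpS⟩ := h
  obtain ⟨a, b, hab⟩ := Walk.mem_support_iff_exists_append.mp hx
  have hb_spine : ∀ z ∈ b.support, z ∈ E.spine.support := fun z hz => by simp [hab, hz]
  have hb : b.IsPath := (hab ▸ E.isPath_spine).of_append_right
  refine ⟨b.append p, isPath_append_of_support_inter hb hp
    fun z hzb hzp => E.eq_tip z (hb_spine z hzb) (hpU z hzp), fun z hz => ?_, ?_⟩
  · exact ((Walk.mem_support_append_iff _ _).mp hz).symm.imp (hpU z) (hb_spine z)
  · have hzero : markCount S a = 0 ∧ markCount S b = 0 := by simpa [hab] using hS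
    rw [markCount_append, hzero.2, hpS]

end Ear

/-- A good marking of part of `G`: a set `marks` of pairs of vertices in `verts`, of which only the
edges of `G` matter, such that any two vertices in `verts` are joined within `verts` by a path with
exactly one marked edge. -/
structure PartialMarking {V : Type*} (G : SimpleGraph V) where
  verts : Set V
  marks : Set (Sym2 V)
  marks_subset : marks ⊆ verts.sym2
  joined : verts.Pairwise (JoinedOnce G marks verts)

namespace PartialMarking

variable {V : Type*} {G : SimpleGraph V}

/-- The old marks are kept exactly, so that the paths joining old vertices stay valid in a larger
marking. -/
instance : Preorder (PartialMarking G) where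
  le P Q := P.verts ⊆ Q.verts ∧ P.marks = Q.marks ∩ P.verts.sym2
  le_refl P := ⟨subset_rfl, (Set.inter_eq_left.mpr P.marks_subset).symm⟩
  le_trans P Q R hPQ hQR := by
    refine ⟨hPQ.1.trans hQR.1, ?_⟩
    have hsub : P.verts.sym2 ⊆ Q.verts.sym2 := sym2_subset_sym2 hPQ.1
    rw [hPQ.2, hQR.2, Set.inter_assoc, Set.inter_eq_right.mpr hsub]

/-- The empty marking of a single vertex. -/
def singleton (G : SimpleGraph V) (v : V) : PartialMarking G where
  verts := {v}
  marks := ∅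
  marks_subset := Set.empty_subset _
  joined := Set.pairwise_singleton v _

lemma marks_eq_inter_of_subset_insert (P : PartialMarking G) (E : Ear G P.verts)
    {S : Set (Sym2 V)} (hPS : P.marks ⊆ S) (hSP : S ⊆ insert s(E.start, E.foot) P.marks) :
    P.marks = S ∩ P.verts.sym2 := by
  refine (Set.subset_inter hPS P.marks_subset).antisymm fun e ⟨heS, heU⟩ => ?_
  refine (hSP heS).resolve_left ?_
  rintro rfl
  exact E.start_notMem heU.1

lemma markCount_spine_eq_zero_of_subset_insert (P : PartialMarking G) (E : Ear G P.verts)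
    {S : Set (Sym2 V)} (hSP : S ⊆ insert s(E.start, E.foot) P.marks) :
    markCount S E.spine = 0 := by
  refine markCount_eq_zero.mpr fun e he heS => ?_
  rcases hSP heS with rfl | heP
  · exact E.notMem_edges_spine he
  · exact E.notMem_sym2_of_mem_edges_spine he (P.marks_subset heP)

lemma exists_fits (P : PartialMarking G) (E : Ear G P.verts) :
    ∃ S, P.marks ⊆ S ∧ S ⊆ insert s(E.start, E.foot) P.marks ∧ E.Fits S := by
  by_cases hclosed : E.foot = E.tip
  · refine ⟨_, Set.subset_insert _ _, subset_rfl,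
      P.markCount_spine_eq_zero_of_subset_insert E subset_rfl,
      Walk.nil.copy rfl hclosed, by simp, by simp [E.foot_mem], ?_⟩
    rw [markCount_cons_of_mem _ (Set.mem_insert _ _)]
    simp [markCount]
  · obtain ⟨m, hm, hmU, hmS⟩ := P.joined E.foot_mem E.tip_mem hclosed
    refine ⟨P.marks, subset_rfl, Set.subset_insert _ _,
      P.markCount_spine_eq_zero_of_subset_insert E (Set.subset_insert _ _), m, hm, hmU, ?_⟩
    rwa [markCount_cons_of_notMem _ fun h => E.start_notMem (P.marks_subset h).1]

lemma exists_ge_of_ear (P : PartialMarking G) (E : Ear G P.verts) :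
    ∃ Q, P ≤ Q ∧ E.start ∈ Q.verts := by
  obtain ⟨S, hPS, hSP, hS⟩ := P.exists_fits E
  have hP : P.marks = S ∩ P.verts.sym2 := P.marks_eq_inter_of_subset_insert E hPS hSP
  have hsub : P.verts ⊆ E.union := Set.subset_union_left
  have hstart : E.start ∈ E.union := .inr E.spine.start_mem_support
  have hSU : S ⊆ E.union.sym2 := hSP.trans <| Set.insert_subset ⟨hstart, hsub E.foot_mem⟩ <|
    P.marks_subset.trans <| sym2_subset_sym2 hsub
  have hmixed : ∀ x ∈ E.spine.support, ∀ y ∈ P.verts, x ≠ y → JoinedOnce G S E.union x y := by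
    intro x hx y hy hxy
    by_cases hy_tip : E.tip = y
    · exact hS.joinedOnce_of_mem_spine hx (hy_tip ▸ E.spine.end_mem_support) hxy
    · exact E.joinedOnce_of_tip hS.markCount_spine hx
        ((P.joined E.tip_mem hy hy_tip).mono subset_rfl hP)
  refine ⟨⟨E.union, S, hSU, ?_⟩, ⟨hsub, hP⟩, hstart⟩
  rintro x (hx | hx) y (hy | hy) hxy
  · exact (P.joined hx hy hxy).mono hsub hP
  · exact (hmixed y hy x hx hxy.symm).symm
  · exact hmixed x hx y hy hxy
  · exact hS.joinedOnce_of_mem_spine hx hy hxy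

lemma marks_eq_iUnion_inter_of_isChain {c : Set (PartialMarking G)} (hc : IsChain (· ≤ ·) c)
    {P : PartialMarking G} (hP : P ∈ c) : P.marks = (⋃ Q ∈ c, Q.marks) ∩ P.verts.sym2 := by
  refine (Set.subset_inter (Set.subset_biUnion_of_mem hP) P.marks_subset).antisymm ?_
  rintro e ⟨he, heP⟩
  obtain ⟨Q, hQ, heQ⟩ := Set.mem_iUnion₂.mp he
  rcases hc.total hP hQ with hPQ | hQP
  · exact hPQ.2 ▸ ⟨heQ, heP⟩
  · exact (hQP.2 ▸ heQ).1

lemma bddAbove_of_isChain {c : Set (PartialMarking G)} (hc : IsChain (· ≤ ·) c) :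
    BddAbove c := by
  have hverts : ∀ P ∈ c, P.verts ⊆ ⋃ Q ∈ c, Q.verts := fun P hP => Set.subset_biUnion_of_mem hP
  have hmarks : ∀ P ∈ c, P.marks = (⋃ Q ∈ c, Q.marks) ∩ P.verts.sym2 :=
    fun P hP => marks_eq_iUnion_inter_of_isChain hc hP
  have hsub : (⋃ Q ∈ c, Q.marks) ⊆ (⋃ Q ∈ c, Q.verts).sym2 := Set.iUnion₂_subset fun P hP =>
    P.marks_subset.trans (sym2_subset_sym2 (hverts P hP))
  refine ⟨⟨_, _, hsub, ?_⟩, fun P hP => ⟨hverts P hP, hmarks P hP⟩⟩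
  intro x hx y hy hxy
  obtain ⟨P, hP, hxP⟩ := Set.mem_iUnion₂.mp hx
  obtain ⟨Q, hQ, hyQ⟩ := Set.mem_iUnion₂.mp hy
  rcases hc.total hP hQ with hPQ | hQP
  · exact (Q.joined (hPQ.1 hxP) hyQ hxy).mono (hverts Q hQ) (hmarks Q hQ)
  · exact (P.joined hxP (hQP.1 hyQ) hxy).mono (hverts P hP) (hmarks P hP)

lemma exists_verts_eq_univ (hG : G.IsEdgeConnected 2) :
    ∃ P : PartialMarking G, P.verts = Set.univ := by
  rcases isEmpty_or_nonempty V with _ | ⟨⟨v⟩⟩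
  · obtain ⟨P⟩ := bddAbove_of_isChain (G := G) IsChain.empty
    exact ⟨P, Subsingleton.elim _ _⟩
  obtain ⟨P, hvP, hP⟩ := zorn_le_nonempty_Ici₀ (singleton G v)
    (fun c _ hc _ _ => bddAbove_of_isChain hc) (singleton G v) le_rfl
  refine ⟨P, ?_⟩
  by_contra hne
  obtain ⟨E⟩ := Ear.exists_of_isEdgeConnected_two hG ⟨v, hvP.1 rfl⟩ hne
  obtain ⟨Q, hPQ, hQ⟩ := P.exists_ge_of_ear E
  exact E.start_notMem ((hP hPQ).1 hQ)

end PartialMarking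

section Coloring

variable {V : Type*} {G : SimpleGraph V}

lemma exists_isCFCColoring_two (hG : G.IsEdgeConnected 2) :
    ∃ c : Sym2 V → Fin 2, IsCFCColoring G 2 c := by
  classical
  obtain ⟨P, hP⟩ := PartialMarking.exists_verts_eq_univ hG
  refine ⟨fun e => if e ∈ P.marks then 1 else 0, fun u v huv => ?_⟩
  obtain ⟨p, hp, -, hpS⟩ := P.joined (hP ▸ Set.mem_univ u) (hP ▸ Set.mem_univ v) huv
  refine ⟨p, hp, 1, ?_⟩
  rw [markCount, List.countP_eq_length_filter] at hpS
  convert hpS using 3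
  simp

lemma IsCFCColoring.eq_top {k : ℕ} [Subsingleton (Fin k)] {c : Sym2 V → Fin k}
    (hc : IsCFCColoring G k c) : G = ⊤ := by
  refine eq_top_iff.mpr fun u v huv => ?_
  obtain ⟨p, -, i, hi⟩ := hc u v huv
  have hall : ∀ e ∈ p.edges, decide (c e = i) = true := fun e _ => by
    simpa using Subsingleton.elim _ _
  rw [List.filter_eq_self.mpr hall, Walk.length_edges] at hi
  exact Walk.adj_of_length_eq_one hi

lemma isEdgeConnected_two_of_preconnected_deleteEdges (hG : G.Preconnected)
    (h : ∀ e ∈ G.edgeSet, (G.deleteEdges {e}).Preconnected) : G.IsEdgeConnected 2 := by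
  refine isEdgeConnected_two.mpr fun e => ?_
  by_cases he : e ∈ G.edgeSet
  · exact h e he
  · rwa [deleteEdges_eq_self.mpr (Set.disjoint_singleton_right.mpr he)]

theorem cfc_two_edge_connected_general (hG : G.IsEdgeConnected 2) (hnc : G ≠ ⊤) :
    cfcNum G = 2 := by
  have hmem := exists_isCFCColoring_two hG
  refine le_antisymm (Nat.sInf_le hmem) (le_csInf ⟨2, hmem⟩ ?_)
  rintro k ⟨c, hc⟩
  by_contra! hk
  have : Subsingleton (Fin k) := Fin.subsingleton_iff_le_one.mpr (Nat.le_of_lt_succ hk)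
  exact hnc hc.eq_top

end Coloring

/-- Every noncomplete 2-edge-connected graph `G` satisfies `cfc(G) = 2`. -/
theorem cfc_two_edge_connected {V : Type*} [Fintype V] (G : SimpleGraph V)
    (hG : G.Connected) (h2 : 2 ≤ Fintype.card V)
    (h2econn : ∀ e ∈ G.edgeSet, (G.deleteEdges {e}).Connected)
    (hnc : G ≠ ⊤) :
    cfcNum G = 2 :=
  cfc_two_edge_connected_general (isEdgeConnected_two_of_preconnected_deleteEdges hG.preconnected
    fun e he => (h2econn e he).preconnected) hnc
end

section
/- For every integer n ≥ 2, the path P_n on n vertices satisfies cfc(P_n) = ⌈log₂ n⌉. -/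
open SimpleGraph

/-!
In an acyclic graph, the parity of the number of edges of a given color along a walk depends only
on its endpoints. Fixing a root, the vector of these parities over the `k` colors separates the
vertices of a conflict-free connected coloring, because a color used exactly once between `u` and
`v` changes its parity; hence there are at most `2 ^ k` vertices. Conversely, color the edge
`{j - 1, j}` of the path by the 2-adic valuation of `j`: between two integers of equal valuation
lies one of larger valuation, so the largest valuation on an interval occurs exactly once.
-/

section Acyclic

variable {V : Type*} {G : SimpleGraph V}

theorem IsCFCColoring.preconnected {k : ℕ} {c : Sym2 V → Fin k} (hc : IsCFCColoring G k c) :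
    G.Preconnected := by
  intro u v
  obtain rfl | huv := eq_or_ne u v
  · exact .rfl
  · obtain ⟨p, -⟩ := hc u v huv
    exact p.reachable

theorem countP_edges_modEq_of_isAcyclic_of_isPath (hG : G.IsAcyclic) (P : Sym2 V → Bool) {u v : V}
    (w : G.Walk u v) {p : G.Walk u v} (hp : p.IsPath) :
    w.edges.countP P ≡ p.edges.countP P [MOD 2] := by
  induction w with
  | nil => rw [(Walk.isPath_iff_nil.1 hp).eq_nil]
  | @cons u v x h w ih =>
    by_cases hv : v ∈ p.support
    · cases p with
      | nil => exact absurd (List.mem_singleton.1 hv) h.ne'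
      | @cons _ y _ hy p =>
        obtain rfl : v = y := by simpa using hG.eq_snd_of_adj_start hp h hv
        simpa only [Walk.edges_cons, List.countP_cons] using (ih hp.of_cons).add_right _
    · have hw := ih (hp.cons (h := h.symm) hv)
      simp only [Walk.edges_cons, List.countP_cons, Sym2.eq_swap (a := v), Nat.ModEq] at hw ⊢
      lia

theorem countP_edges_modEq_of_isAcyclic (hG : G.IsAcyclic) (P : Sym2 V → Bool) {u v : V}
    (w w' : G.Walk u v) :
    w.edges.countP P ≡ w'.edges.countP P [MOD 2] := by
  classical
  exact (countP_edges_modEq_of_isAcyclic_of_isPath hG P w w.bypass_isPath).trans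
    (countP_edges_modEq_of_isAcyclic_of_isPath hG P w' w.bypass_isPath).symm

theorem IsCFCColoring.card_le_two_pow {k : ℕ} {c : Sym2 V → Fin k} (hc : IsCFCColoring G k c)
    (hG : G.IsAcyclic) : ENat.card V ≤ 2 ^ k := by
  obtain hV | ⟨⟨root⟩⟩ := isEmpty_or_nonempty V
  · simp [(ENat.card_eq_zero_iff_empty V).2 hV]
  let w (v : V) : G.Walk root v := (hc.preconnected root v).some
  let parity (v : V) (i : Fin k) : ZMod 2 := (w v).edges.countP (c · = i)
  have parity_injective : Function.Injective parity := by
    intro u v huv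
    by_contra hne
    obtain ⟨q, -, i, hi⟩ := hc u v hne
    have hu : (w u).edges.countP (c · = i) ≡ (w v).edges.countP (c · = i) [MOD 2] :=
      (ZMod.natCast_eq_natCast_iff _ _ _).1 (congrFun huv i)
    have hv := countP_edges_modEq_of_isAcyclic hG (c · = i) ((w u).append q) (w v)
    rw [Walk.edges_append, List.countP_append, List.countP_eq_length_filter (l := q.edges), hi]
      at hv
    simp only [Nat.ModEq] at hu hv
    lia
  simpa using ENat.card_le_card_of_injective parity_injective

end Acyclic

theorem isAcyclic_hasse (α : Type*) [LinearOrder α] : (hasse α).IsAcyclic := by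
  intro v c hc
  obtain ⟨m, hm, hmax⟩ := c.support.toFinset.exists_max_image id ⟨v, by simp⟩
  simp only [List.mem_toFinset, id] at hm hmax
  have covBy_of_adj {x : α} (hx : c.toSubgraph.Adj m x) : x ⋖ m :=
    (hasse_adj.1 hx.adj_sub).resolve_left fun hmx =>
      hmx.lt.not_ge (hmax x (c.mem_verts_toSubgraph.1 hx.snd_mem))
  obtain ⟨x, y, hxy, hN⟩ := Set.ncard_eq_two.1 (hc.ncard_neighborSet_toSubgraph_eq_two hm)
  have hx : x ∈ c.toSubgraph.neighborSet m := hN ▸ Set.mem_insert x {y}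
  have hy : y ∈ c.toSubgraph.neighborSet m := hN ▸ Set.mem_insert_of_mem x rfl
  exact hxy ((covBy_of_adj hx).unique_left (covBy_of_adj hy))

theorem isAcyclic_pathGraph (n : ℕ) : (pathGraph n).IsAcyclic :=
  isAcyclic_hasse (Fin n)

theorem padicValNat_lt_of_lt_pow {p k x : ℕ} (hk : 0 < k) (hx : x < p ^ k) :
    padicValNat p x < k := by
  obtain rfl | hx0 := eq_or_ne x 0
  · simpa using hk
  · exact (padicValNat_le_nat_log x).trans_lt (Nat.log_lt_of_lt_pow hx0 hx)

theorem exists_lt_padicValNat_two_of_eq {a b : ℕ} (ha : 0 < a) (hab : a < b)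
    (h : padicValNat 2 a = padicValNat 2 b) :
    ∃ x, a < x ∧ x < b ∧ padicValNat 2 a < padicValNat 2 x := by
  set m := padicValNat 2 a with hm
  have odd_of_eq {s : ℕ} (hs : 0 < 2 ^ m * s) (hval : padicValNat 2 (2 ^ m * s) = m) : ¬ 2 ∣ s :=
    fun h2 => pow_succ_padicValNat_not_dvd (p := 2) hs.ne'
      (by rw [hval, pow_succ]; exact Nat.mul_dvd_mul_left _ h2)
  obtain ⟨s, hs⟩ : 2 ^ m ∣ a := pow_padicValNat_dvd
  obtain ⟨t, ht⟩ : 2 ^ m ∣ b := h ▸ pow_padicValNat_dvd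
  have hs_odd : ¬ 2 ∣ s := odd_of_eq (hs ▸ ha) (hs ▸ hm.symm)
  have ht_odd : ¬ 2 ∣ t := odd_of_eq (ht ▸ ha.trans hab) (ht ▸ h.symm)
  have hst : s < t := Nat.lt_of_mul_lt_mul_left (hs ▸ ht ▸ hab)
  have hpos : 0 < 2 ^ m := by positivity
  refine ⟨2 ^ m * (s + 1), ?_, ?_, ?_⟩
  · rw [hs]; exact Nat.mul_lt_mul_of_pos_left (by lia) hpos
  · rw [ht]; exact Nat.mul_lt_mul_of_pos_left (by lia) hpos
  · refine (padicValNat_dvd_iff_le (by positivity)).1 ?_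
    rw [pow_succ]
    exact Nat.mul_dvd_mul_left _ (by lia)

theorem exists_mem_Ioc_forall_padicValNat_two_lt {a b : ℕ} (hab : a < b) :
    ∃ j ∈ Finset.Ioc a b, ∀ x ∈ Finset.Ioc a b, x ≠ j → padicValNat 2 x < padicValNat 2 j := by
  obtain ⟨j, hj, hmax⟩ := (Finset.Ioc a b).exists_max_image (padicValNat 2)
    (Finset.nonempty_Ioc.2 hab)
  refine ⟨j, hj, fun x hx hxj => (hmax x hx).lt_of_ne fun heq => ?_⟩
  rw [Finset.mem_Ioc] at hx hj
  have no_larger (y : ℕ) (hay : a < y) (hyb : y ≤ b) : padicValNat 2 y ≤ padicValNat 2 j :=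
    hmax y (Finset.mem_Ioc.2 ⟨hay, hyb⟩)
  obtain hlt | hlt := hxj.lt_or_gt
  · obtain ⟨y, hxy, hyj, hy⟩ := exists_lt_padicValNat_two_of_eq (by lia) hlt heq
    exact (heq ▸ hy).not_ge (no_larger y (by lia) (by lia))
  · obtain ⟨y, hjy, hyx, hy⟩ := exists_lt_padicValNat_two_of_eq (by lia) hlt heq.symm
    exact hy.not_ge (no_larger y (by lia) (by lia))

section Path

variable {n : ℕ}

theorem exists_walk_pathGraph_map_sup_edges (d : ℕ) {u v : Fin n} (huv : u.val + d = v.val) :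
    ∃ p : (pathGraph n).Walk u v,
      p.edges.map (fun e => e.sup.val) = List.range' (u.val + 1) d := by
  induction d generalizing u with
  | zero =>
    obtain rfl : u = v := Fin.ext huv
    exact ⟨.nil, rfl⟩
  | succ d ih =>
    let u' : Fin n := ⟨u.val + 1, by lia⟩
    have hu' : u ≤ u' := Nat.le_succ _
    obtain ⟨p, hp⟩ := ih (u := u') (by simp only [u']; lia)
    refine ⟨.cons (pathGraph_adj.2 (.inl rfl)) p, ?_⟩
    rw [Walk.edges_cons, List.map_cons, hp, List.range'_succ, Sym2.sup_mk, sup_eq_right.2 hu']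

theorem exists_isPath_pathGraph_map_sup_edges {u v : Fin n} (huv : u ≤ v) :
    ∃ p : (pathGraph n).Walk u v, p.IsPath ∧
      p.edges.map (fun e => e.sup.val) = List.range' (u.val + 1) (v.val - u.val) := by
  obtain ⟨p, hp⟩ := exists_walk_pathGraph_map_sup_edges _ (Nat.add_sub_of_le huv)
  have hnodup : p.edges.Nodup := .of_map _ (hp ▸ List.nodup_range')
  exact ⟨p, ((isAcyclic_pathGraph n).isPath_iff_isTrail p).2 ⟨hnodup⟩, hp⟩

/-- The ruler coloring of the path on `n ≤ 2 ^ k` vertices, which witnesses the upper bound for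
the conflict-free connection number: the edge `{j - 1, j}` gets the 2-adic valuation of `j`. The
index `j` is read off as the larger endpoint, so pairs that are not edges get a color as well. -/
def rulerColoring {k : ℕ} (hk : 0 < k) (hn : n ≤ 2 ^ k) (e : Sym2 (Fin n)) : Fin k :=
  ⟨padicValNat 2 e.sup, padicValNat_lt_of_lt_pow hk (e.sup.isLt.trans_le hn)⟩

theorem isCFCColoring_rulerColoring {k : ℕ} (hk : 0 < k) (hn : n ≤ 2 ^ k) :
    IsCFCColoring (pathGraph n) k (rulerColoring hk hn) := by
  intro u v hne
  wlog huv : u < v generalizing u v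
  · obtain ⟨p, hp, i, hi⟩ := this v u hne.symm (hne.symm.lt_of_le (not_lt.1 huv))
    refine ⟨p.reverse, hp.reverse, i, ?_⟩
    rwa [Walk.edges_reverse, List.filter_reverse, List.length_reverse]
  obtain ⟨p, hp, hedges⟩ := exists_isPath_pathGraph_map_sup_edges huv.le
  obtain ⟨j, hj, hmax⟩ := exists_mem_Ioc_forall_padicValNat_two_lt (Fin.lt_def.1 huv)
  have mem_edges_iff (x : ℕ) :
      x ∈ p.edges.map (fun e => e.sup.val) ↔ x ∈ Finset.Ioc u.val v.val := by
    rw [hedges, List.mem_range'_1, Finset.mem_Ioc]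
    lia
  have color_eq_iff {e : Sym2 (Fin n)} (he : e ∈ p.edges) :
      padicValNat 2 e.sup = padicValNat 2 j ↔ e.sup.val = j :=
    ⟨fun h => by_contra fun hej =>
      (hmax _ ((mem_edges_iff _).1 (List.mem_map_of_mem he)) hej).ne h, fun h => h ▸ rfl⟩
  have hjk : padicValNat 2 j < k :=
    padicValNat_lt_of_lt_pow hk (((Finset.mem_Ioc.1 hj).2.trans_lt v.isLt).trans_le hn)
  refine ⟨p, hp, ⟨padicValNat 2 j, hjk⟩, ?_⟩
  calc (p.edges.filter (fun e => rulerColoring hk hn e = ⟨padicValNat 2 j, hjk⟩)).length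
      = (p.edges.filter (fun e => e.sup.val = j)).length := by
        congr 1
        exact List.filter_congr fun e he => by simp [rulerColoring, color_eq_iff he]
    _ = (p.edges.map (fun e => e.sup.val)).count j := by
        rw [← List.countP_eq_length_filter, List.count, List.countP_map]
        rfl
    _ = 1 := List.count_eq_one_of_mem (hedges ▸ List.nodup_range') ((mem_edges_iff j).2 hj)

theorem exists_isCFCColoring_pathGraph_iff (h2 : 2 ≤ n) {k : ℕ} :
    (∃ c, IsCFCColoring (pathGraph n) k c) ↔ n ≤ 2 ^ k := by
  constructor
  · rintro ⟨c, hc⟩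
    have hcard := hc.card_le_two_pow (isAcyclic_pathGraph n)
    rw [ENat.card_eq_coe_fintype_card, Fintype.card_fin] at hcard
    exact_mod_cast hcard
  · intro hn
    have hk : 0 < k := Nat.pos_of_ne_zero (by rintro rfl; lia)
    exact ⟨rulerColoring hk hn, isCFCColoring_rulerColoring hk hn⟩

end Path

/-- For every `n ≥ 2`, the path on `n` vertices satisfies `cfc(Pₙ) = ⌈log₂ n⌉`. -/
theorem cfc_pathGraph (n : ℕ) (h2 : 2 ≤ n) :
    cfcNum (SimpleGraph.pathGraph n) = Nat.clog 2 n := by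
  have hset : {k | ∃ c, IsCFCColoring (pathGraph n) k c} = Set.Ici (Nat.clog 2 n) := by
    ext k
    rw [Set.mem_ofPred_eq, exists_isCFCColoring_pathGraph_iff h2, Set.mem_Ici,
      Nat.clog_le_iff_le_pow one_lt_two]
  rw [cfcNum, hset, csInf_Ici]
end
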